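/- Let M = (X, A, P, R, γ) be a finite MDP, let M₁ = (X, A, P₁, R₁, γ) and M₂ = (X, A, P₂, R₂, γ) be two further MDPs over the same X, A, γ, and suppose the rewards of M satisfy 0 ≤ R(x,a,y) ≤ R⁰ for all (x,a,y). Let ε > 0 and set ε' := (1−γ)² ε / ( |X| (1 − γ + R⁰) ). If for each i ∈ {1,2} one has |P(x,a,y) R(x,a,y) − Pᵢ(x,a,y) Rᵢ(x,a,y)| ≤ ε' and |P(x,a,y) − Pᵢ(x,a,y)| ≤ ε' for all (x,a,y), then for every stationary policy π and every (x,a) ∈ X × A, |Q^π_{M₁}(x,a) − Q^π_{M₂}(x,a)| ≤ 2ε. -/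

import Mathlib

/-!
Let `T` and `Tᵢ` be the Bellman operators of `M` and `Mᵢ` for the policy `π`. In the sup norm each
is a `γ`-contraction, so any `Q` lies within `‖Q - Tᵢ Q‖ / (1 - γ)` of the fixed point of `Tᵢ`.
At `Q = 0`, for `T`, this reads `‖Q^π_M‖ ≤ ‖R‖ / (1 - γ)`. At `Q = Q^π_M` the residual is
`‖T Q - Tᵢ Q‖`, a sum over the `|X|` successor states of differences controlled by `ε'` and `‖Q‖`;
the constant `ε'` is chosen so that the resulting distance is at most `ε`. The reference value
function `Q^π_M` itself is provided by Banach's fixed point theorem.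
-/

lemma norm_sum_smul_le_of_mem_stdSimplex {ι E : Type*} [Fintype ι] [SeminormedAddCommGroup E]
    [NormedSpace ℝ E] {w : ι → ℝ} (hw : w ∈ stdSimplex ℝ ι) (f : ι → E) :
    ‖∑ i, w i • f i‖ ≤ ‖f‖ := by
  rw [← mem_closedBall_zero_iff]
  exact (convex_closedBall (0 : E) ‖f‖).sum_mem (fun i _ => hw.1 i) hw.2
    fun i _ => mem_closedBall_zero_iff.2 (norm_le_pi_norm f i)

section StateValue

variable {X A : Type*} [Fintype A]

/-- The state value function `V(y) = ∑ b, π(y, b) Q(y, b)` induced by an action value function `Q`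
and a policy `π`. -/
def stateValue (π Q : X → A → ℝ) (y : X) : ℝ :=
  ∑ b, π y b * Q y b

lemma stateValue_sub (π Q Q' : X → A → ℝ) :
    stateValue π (Q - Q') = stateValue π Q - stateValue π Q' := by
  ext y
  simp only [stateValue, Pi.sub_apply, mul_sub, Finset.sum_sub_distrib]

lemma norm_stateValue_le [Fintype X] {π : X → A → ℝ} (hπ : ∀ x, π x ∈ stdSimplex ℝ A)
    (Q : X → A → ℝ) : ‖stateValue π Q‖ ≤ ‖Q‖ :=
  (pi_norm_le_iff_of_nonneg (norm_nonneg Q)).2 fun y =>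
    (norm_sum_smul_le_of_mem_stdSimplex (hπ y) (Q y)).trans (norm_le_pi_norm Q y)

end StateValue

section BellmanOperator

open Function
open scoped NNReal

variable {X A : Type*} [Fintype X] [Fintype A]

/-- The Bellman operator of the policy `π` in the MDP with transition probabilities `P`, mean
rewards `R` and discount factor `γ`; the value function `Q^π` is its fixed point. -/
def bellmanOperator (γ : ℝ) (P R : X → A → X → ℝ) (π Q : X → A → ℝ) (x : X) (a : A) : ℝ :=
  ∑ y, P x a y * (R x a y + γ * stateValue π Q y)

variable {γ : ℝ≥0} {P P₁ P₂ R R₁ R₂ : X → A → X → ℝ} {π Q Q₁ Q₂ : X → A → ℝ}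

lemma bellmanOperator_sub_apply (γ : ℝ) (P R : X → A → X → ℝ) (π Q Q' : X → A → ℝ)
    (x : X) (a : A) :
    bellmanOperator γ P R π Q x a - bellmanOperator γ P R π Q' x a =
      γ * ∑ y, P x a y * stateValue π (Q - Q') y := by
  simp only [bellmanOperator, stateValue_sub, Pi.sub_apply, ← Finset.sum_sub_distrib,
    Finset.mul_sum]
  exact Finset.sum_congr rfl fun y _ => by ring

lemma contractingWith_bellmanOperator (hγ : γ < 1) (hP : ∀ x a, P x a ∈ stdSimplex ℝ X)
    (hπ : ∀ x, π x ∈ stdSimplex ℝ A) (R : X → A → X → ℝ) :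
    ContractingWith γ (bellmanOperator γ P R π) := by
  refine ⟨hγ, LipschitzWith.of_dist_le_mul fun Q Q' => ?_⟩
  have hbound : 0 ≤ γ * dist Q Q' := by positivity
  refine (dist_pi_le_iff hbound).2 fun x => (dist_pi_le_iff hbound).2 fun a => ?_
  rw [Real.dist_eq, bellmanOperator_sub_apply, abs_mul, NNReal.abs_eq, dist_eq_norm]
  gcongr
  exact (norm_sum_smul_le_of_mem_stdSimplex (hP x a) _).trans (norm_stateValue_le hπ _)

lemma norm_bellmanOperator_zero_le (γ : ℝ) (hP : ∀ x a, P x a ∈ stdSimplex ℝ X)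
    (R : X → A → X → ℝ) (π : X → A → ℝ) : ‖bellmanOperator γ P R π 0‖ ≤ ‖R‖ := by
  simp only [pi_norm_le_iff_of_nonneg (norm_nonneg R)]
  intro x a
  calc ‖bellmanOperator γ P R π 0 x a‖ = ‖∑ y, P x a y • R x a y‖ := by
        simp [bellmanOperator, stateValue]
    _ ≤ ‖R x a‖ := norm_sum_smul_le_of_mem_stdSimplex (hP x a) (R x a)
    _ ≤ ‖R‖ := (norm_le_pi_norm (R x) a).trans (norm_le_pi_norm R x)

lemma norm_le_of_isFixedPt_bellmanOperator (hγ : γ < 1) (hP : ∀ x a, P x a ∈ stdSimplex ℝ X)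
    (hπ : ∀ x, π x ∈ stdSimplex ℝ A) (hQ : IsFixedPt (bellmanOperator γ P R π) Q) :
    ‖Q‖ ≤ ‖R‖ / (1 - γ) := by
  have hdist := (contractingWith_bellmanOperator hγ hP hπ R).dist_le_of_fixedPoint 0 hQ
  rw [dist_zero_left, dist_zero_left] at hdist
  have hγ' : 0 ≤ 1 - (γ : ℝ) := sub_nonneg.2 (NNReal.coe_le_one.2 hγ.le)
  exact hdist.trans (by gcongr; exact norm_bellmanOperator_zero_le γ hP R π)

lemma norm_bellmanOperator_sub_bellmanOperator_le (γ : ℝ≥0) (P P₁ R R₁ : X → A → X → ℝ)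
    (hπ : ∀ x, π x ∈ stdSimplex ℝ A) (Q : X → A → ℝ) :
    ‖bellmanOperator γ P R π Q - bellmanOperator γ P₁ R₁ π Q‖ ≤
      Fintype.card X * (‖P * R - P₁ * R₁‖ + γ * (‖P - P₁‖ * ‖Q‖)) := by
  have abs_apply_le (f : X → A → X → ℝ) (x : X) (a : A) (y : X) : |f x a y| ≤ ‖f‖ :=
    ((norm_le_pi_norm (f x a) y).trans (norm_le_pi_norm (f x) a)).trans (norm_le_pi_norm f x)
  have hV (y : X) : |stateValue π Q y| ≤ ‖Q‖ :=
    (norm_le_pi_norm _ y).trans (norm_stateValue_le hπ Q)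
  refine (pi_norm_le_iff_of_nonneg (by positivity)).2 fun x =>
    (pi_norm_le_iff_of_nonneg (by positivity)).2 fun a => ?_
  calc |bellmanOperator γ P R π Q x a - bellmanOperator γ P₁ R₁ π Q x a|
      = |∑ y, ((P * R - P₁ * R₁) x a y + γ * ((P - P₁) x a y * stateValue π Q y))| := by
        simp only [bellmanOperator, ← Finset.sum_sub_distrib, Pi.sub_apply, Pi.mul_apply]
        congr! 2
        ring
    _ ≤ ∑ y, |(P * R - P₁ * R₁) x a y + γ * ((P - P₁) x a y * stateValue π Q y)| :=
        Finset.abs_sum_le_sum_abs _ _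
    _ ≤ ∑ _y : X, (‖P * R - P₁ * R₁‖ + γ * (‖P - P₁‖ * ‖Q‖)) := by
        refine Finset.sum_le_sum fun y _ => (abs_add_le _ _).trans ?_
        rw [abs_mul, abs_mul, NNReal.abs_eq]
        gcongr
        exacts [abs_apply_le _ x a y, abs_apply_le _ x a y, hV y]
    _ = Fintype.card X * (‖P * R - P₁ * R₁‖ + γ * (‖P - P₁‖ * ‖Q‖)) := by
        rw [Finset.sum_const, Finset.card_univ, nsmul_eq_mul]

lemma norm_sub_le_of_isFixedPt_bellmanOperator (hγ : γ < 1)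
    (hP : ∀ x a, P x a ∈ stdSimplex ℝ X) (hP₁ : ∀ x a, P₁ x a ∈ stdSimplex ℝ X)
    (hπ : ∀ x, π x ∈ stdSimplex ℝ A) (hQ : IsFixedPt (bellmanOperator γ P R π) Q)
    (hQ₁ : IsFixedPt (bellmanOperator γ P₁ R₁ π) Q₁) :
    ‖Q - Q₁‖ ≤
      Fintype.card X * (‖P * R - P₁ * R₁‖ + γ * (‖P - P₁‖ * (‖R‖ / (1 - γ)))) / (1 - γ) := by
  have hγ' : 0 ≤ 1 - (γ : ℝ) := sub_nonneg.2 (NNReal.coe_le_one.2 hγ.le)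
  calc ‖Q - Q₁‖ ≤ ‖Q - bellmanOperator γ P₁ R₁ π Q‖ / (1 - γ) := by
        simpa only [dist_eq_norm] using
          (contractingWith_bellmanOperator hγ hP₁ hπ R₁).dist_le_of_fixedPoint Q hQ₁
    _ = ‖bellmanOperator γ P R π Q - bellmanOperator γ P₁ R₁ π Q‖ / (1 - γ) := by rw [hQ.eq]
    _ ≤ Fintype.card X * (‖P * R - P₁ * R₁‖ + γ * (‖P - P₁‖ * ‖Q‖)) / (1 - γ) := by
        gcongr
        exact norm_bellmanOperator_sub_bellmanOperator_le γ P P₁ R R₁ hπ Q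
    _ ≤ _ := by
        gcongr
        exact norm_le_of_isFixedPt_bellmanOperator hγ hP hπ hQ

lemma norm_sub_le_of_isFixedPt_bellmanOperator_of_le {δ ρ : ℝ} (hγ : γ < 1)
    (hP : ∀ x a, P x a ∈ stdSimplex ℝ X) (hP₁ : ∀ x a, P₁ x a ∈ stdSimplex ℝ X)
    (hπ : ∀ x, π x ∈ stdSimplex ℝ A) (hR : ‖R‖ ≤ ρ)
    (hPR₁ : ‖P * R - P₁ * R₁‖ ≤ δ) (hPP₁ : ‖P - P₁‖ ≤ δ)
    (hQ : IsFixedPt (bellmanOperator γ P R π) Q)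
    (hQ₁ : IsFixedPt (bellmanOperator γ P₁ R₁ π) Q₁) :
    ‖Q - Q₁‖ ≤ Fintype.card X * (1 - γ + ρ) * δ / (1 - γ) ^ 2 := by
  have hγ' : 0 < 1 - (γ : ℝ) := sub_pos.2 (NNReal.coe_lt_one.2 hγ)
  have hδ : 0 ≤ δ := (norm_nonneg _).trans hPP₁
  have hρ : 0 ≤ ρ := (norm_nonneg _).trans hR
  calc ‖Q - Q₁‖
      ≤ Fintype.card X * (‖P * R - P₁ * R₁‖ + γ * (‖P - P₁‖ * (‖R‖ / (1 - γ)))) / (1 - γ) :=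
        norm_sub_le_of_isFixedPt_bellmanOperator hγ hP hP₁ hπ hQ hQ₁
    _ ≤ Fintype.card X * (δ + 1 * (δ * (ρ / (1 - γ)))) / (1 - γ) := by
        gcongr
        exact hγ.le
    _ = Fintype.card X * (1 - γ + ρ) * δ / (1 - γ) ^ 2 := by
        field_simp

lemma norm_sub_le_of_close_to_common_mdp {δ ρ : ℝ} (hγ : γ < 1)
    (hP : ∀ x a, P x a ∈ stdSimplex ℝ X) (hP₁ : ∀ x a, P₁ x a ∈ stdSimplex ℝ X)
    (hP₂ : ∀ x a, P₂ x a ∈ stdSimplex ℝ X) (hπ : ∀ x, π x ∈ stdSimplex ℝ A) (hR : ‖R‖ ≤ ρ)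
    (hPR₁ : ‖P * R - P₁ * R₁‖ ≤ δ) (hPP₁ : ‖P - P₁‖ ≤ δ)
    (hPR₂ : ‖P * R - P₂ * R₂‖ ≤ δ) (hPP₂ : ‖P - P₂‖ ≤ δ)
    (hQ₁ : IsFixedPt (bellmanOperator γ P₁ R₁ π) Q₁)
    (hQ₂ : IsFixedPt (bellmanOperator γ P₂ R₂ π) Q₂) :
    ‖Q₁ - Q₂‖ ≤ 2 * (Fintype.card X * (1 - γ + ρ) * δ / (1 - γ) ^ 2) := by
  have hT := contractingWith_bellmanOperator hγ hP hπ R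
  set Q := hT.fixedPoint
  have hQ : IsFixedPt (bellmanOperator γ P R π) Q := hT.fixedPoint_isFixedPt
  calc ‖Q₁ - Q₂‖ ≤ ‖Q₁ - Q‖ + ‖Q - Q₂‖ := norm_sub_le_norm_sub_add_norm_sub Q₁ Q Q₂
    _ = ‖Q - Q₁‖ + ‖Q - Q₂‖ := by rw [norm_sub_rev]
    _ ≤ _ := add_le_add
        (norm_sub_le_of_isFixedPt_bellmanOperator_of_le hγ hP hP₁ hπ hR hPR₁ hPP₁ hQ hQ₁)
        (norm_sub_le_of_isFixedPt_bellmanOperator_of_le hγ hP hP₂ hπ hR hPR₂ hPP₂ hQ hQ₂)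
    _ = _ := (two_mul _).symm

end BellmanOperator

theorem stmt_2_general
    {X A : Type*} [Fintype X] [Fintype A]
    (γ : ℝ) (hγ0 : 0 ≤ γ) (hγ1 : γ < 1)
    (P P1 P2 R R1 R2 : X → A → X → ℝ) (R0 : ℝ)
    (hP : ∀ x a, P x a ∈ stdSimplex ℝ X) (hP1 : ∀ x a, P1 x a ∈ stdSimplex ℝ X)
    (hP2 : ∀ x a, P2 x a ∈ stdSimplex ℝ X)
    (hR : ∀ x a y, |R x a y| ≤ R0)
    (ε ε' : ℝ)
    (hε' : ε' = (1 - γ) ^ 2 * ε / ((Fintype.card X : ℝ) * (1 - γ + R0)))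
    (hclose11 : ∀ x a y, |P x a y * R x a y - P1 x a y * R1 x a y| ≤ ε')
    (hclose12 : ∀ x a y, |P x a y - P1 x a y| ≤ ε')
    (hclose21 : ∀ x a y, |P x a y * R x a y - P2 x a y * R2 x a y| ≤ ε')
    (hclose22 : ∀ x a y, |P x a y - P2 x a y| ≤ ε')
    (π : X → A → ℝ) (hπ : ∀ x, π x ∈ stdSimplex ℝ A)
    (Q1 Q2 : X → A → ℝ)
    (hQ1 : ∀ x a, Q1 x a = ∑ y, P1 x a y * (R1 x a y + γ * ∑ b, π y b * Q1 y b))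
    (hQ2 : ∀ x a, Q2 x a = ∑ y, P2 x a y * (R2 x a y + γ * ∑ b, π y b * Q2 y b)) :
    ∀ x a, |Q1 x a - Q2 x a| ≤ 2 * ε := by
  intro x a
  have : Nonempty X := ⟨x⟩
  have hR0 : 0 ≤ R0 := (abs_nonneg _).trans (hR x a x)
  have hε'0 : 0 ≤ ε' := (abs_nonneg _).trans (hclose12 x a x)
  have norm_le {f : X → A → X → ℝ} {r : ℝ} (hr : 0 ≤ r) (hf : ∀ x a y, |f x a y| ≤ r) :
      ‖f‖ ≤ r := by
    simpa only [pi_norm_le_iff_of_nonneg hr, Real.norm_eq_abs] using hf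
  have hε : Fintype.card X * (1 - γ + R0) * ε' / (1 - γ) ^ 2 = ε := by
    have hγ' : 1 - γ ≠ 0 := (sub_pos.2 hγ1).ne'
    have hden : 1 - γ + R0 ≠ 0 := by linarith
    rw [hε']
    field_simp
  lift γ to NNReal using hγ0
  have hdist := norm_sub_le_of_close_to_common_mdp (NNReal.coe_lt_one.1 hγ1) hP hP1 hP2 hπ
    (norm_le hR0 hR) (norm_le hε'0 hclose11) (norm_le hε'0 hclose12) (norm_le hε'0 hclose21)
    (norm_le hε'0 hclose22) (funext₂ fun x a => (hQ1 x a).symm)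
    (funext₂ fun x a => (hQ2 x a).symm)
  rw [hε] at hdist
  exact ((norm_le_pi_norm _ a).trans (norm_le_pi_norm (Q1 - Q2) x)).trans hdist

/-- If two MDPs `M₁`, `M₂` are both `ε'`-close (in transition probabilities and
`P·R` products) to a reference MDP `M` with rewards in `[0, R⁰]`, with
`ε' = (1-γ)² ε / (|X| (1-γ+R⁰))`, then for every stationary policy the value
functions of `M₁` and `M₂` are `2ε`-close. -/
theorem stmt_2
    {X A : Type*} [Fintype X] [Nonempty X] [Fintype A] [Nonempty A]
    (γ : ℝ) (hγ0 : 0 ≤ γ) (hγ1 : γ < 1)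
    (P P1 P2 R R1 R2 : X → A → X → ℝ) (R0 : ℝ)
    (hP0 : ∀ x a y, 0 ≤ P x a y) (hP1 : ∀ x a, ∑ y, P x a y = 1)
    (hP10 : ∀ x a y, 0 ≤ P1 x a y) (hP11 : ∀ x a, ∑ y, P1 x a y = 1)
    (hP20 : ∀ x a y, 0 ≤ P2 x a y) (hP21 : ∀ x a, ∑ y, P2 x a y = 1)
    (hR : ∀ x a y, 0 ≤ R x a y ∧ R x a y ≤ R0)
    (ε ε' : ℝ) (hε : 0 < ε)
    (hε' : ε' = (1 - γ) ^ 2 * ε / ((Fintype.card X : ℝ) * (1 - γ + R0)))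
    (hclose11 : ∀ x a y, |P x a y * R x a y - P1 x a y * R1 x a y| ≤ ε')
    (hclose12 : ∀ x a y, |P x a y - P1 x a y| ≤ ε')
    (hclose21 : ∀ x a y, |P x a y * R x a y - P2 x a y * R2 x a y| ≤ ε')
    (hclose22 : ∀ x a y, |P x a y - P2 x a y| ≤ ε')
    (π : X → A → ℝ) (hπ0 : ∀ x a, 0 ≤ π x a) (hπ1 : ∀ x, ∑ a, π x a = 1)
    (Q1 Q2 : X → A → ℝ)
    (hQ1 : ∀ x a, Q1 x a = ∑ y, P1 x a y * (R1 x a y + γ * ∑ b, π y b * Q1 y b))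
    (hQ2 : ∀ x a, Q2 x a = ∑ y, P2 x a y * (R2 x a y + γ * ∑ b, π y b * Q2 y b)) :
    ∀ x a, |Q1 x a - Q2 x a| ≤ 2 * ε :=
  stmt_2_general γ hγ0 hγ1 P P1 P2 R R1 R2 R0 (fun x a => ⟨hP0 x a, hP1 x a⟩)
    (fun x a => ⟨hP10 x a, hP11 x a⟩) (fun x a => ⟨hP20 x a, hP21 x a⟩)
    (fun x a y => (abs_of_nonneg (hR x a y).1).trans_le (hR x a y).2) ε ε' hε'
    hclose11 hclose12 hclose21 hclose22 π (fun x => ⟨hπ0 x, hπ1 x⟩) Q1 Q2 hQ1 hQ2
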